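/- Fix λ > 0 and δ₀, δ₂ ≥ 0 with δ₀ + δ₂ < λ/4. There exist δ* > 0 and C > 0, depending only on λ, δ₀, δ₂, such that for every δ ∈ (0, δ*) and every backward hyperbolic chart sequence (f̃_k, ℓ_k)_{k≤0} with data (λ, δ₀, δ), the following holds. There is a unique family of maps g_k : B^u(δ ℓ_k^{-1}) → ℝ^{cs} (k ≤ 0) with g_k(0) = 0 and Lip(g_k) ≤ 1/10 such that f̃_k(graph g_k) ⊃ graph g_{k+1} for every k ≤ −1. Moreover: each g_k is C^{1+Lip} with (dg_k)₀ = 0 and Lip(dg_k) ≤ C ℓ_k; and whenever z₁, z₂ ∈ graph g_k ∩ f̃_k^{-1}(graph g_{k+1}), one has |f̃_k(z₁) − f̃_k(z₂)| ≥ (e^λ − δ) |z₁ − z₂|. -/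

import Mathlib

open Metric Set

noncomputable section

/-- The unstable factor `ℝ^u` with the Euclidean norm. -/
abbrev EuSp (du : ℕ) := EuclideanSpace ℝ (Fin du)

/-- The center-stable factor `ℝ^{cs}` with the Euclidean norm. -/
abbrev CsSp (dcs : ℕ) := EuclideanSpace ℝ (Fin dcs)

/-- The product `ℝ^u × ℝ^{cs}`, carrying the norm `‖(u,v)‖ = max (‖u‖, ‖v‖)`. -/
abbrev PSp (du dcs : ℕ) := EuSp du × CsSp dcs

/-- The graph of `g : ℝ^u → ℝ^{cs}` over the closed ball `B^u(r)`. -/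
def uGraph (du dcs : ℕ) (r : ℝ) (g : EuSp du → CsSp dcs) : Set (PSp du dcs) :=
  {p | p.1 ∈ closedBall (0 : EuSp du) r ∧ p.2 = g p.1}

/-- `f` (with derivative field `Df`) is a hyperbolic chart map with data `(lam, δ0, ℓ, δ)`:
it fixes `0`; it is `C^{1+Lip}` on `B(δ ℓ⁻¹)` with `Lip(df) ≤ ℓ`; its derivative at `0`
preserves the splitting `ℝ^u ⊕ ℝ^{cs}`, expanding the unstable factor by at least `e^lam`
and contracting/expanding the center-stable factor by at most `e^{δ0}`; and the
nonlinear part `f - (df)₀` has Lipschitz constant `≤ δ'` on `B(δ' ℓ⁻¹)` for all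
`δ' ∈ (0, δ]`. -/
structure IsChartMap (du dcs : ℕ) (lam δ0 ℓ δ : ℝ)
    (f : PSp du dcs → PSp du dcs)
    (Df : PSp du dcs → (PSp du dcs →L[ℝ] PSp du dcs)) : Prop where
  map_zero : f 0 = 0
  hasDeriv : ∀ z ∈ closedBall (0 : PSp du dcs) (δ / ℓ),
      HasFDerivWithinAt f (Df z) (closedBall (0 : PSp du dcs) (δ / ℓ)) z
  lipDeriv : LipschitzOnWith ℓ.toNNReal Df (closedBall (0 : PSp du dcs) (δ / ℓ))
  deriv_zero_mapsU : ∀ u : EuSp du, (Df 0 (u, 0)).2 = 0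
  deriv_zero_mapsCs : ∀ v : CsSp dcs, (Df 0 (0, v)).1 = 0
  expand : ∀ u : EuSp du, Real.exp lam * ‖u‖ ≤ ‖Df 0 (u, 0)‖
  contract : ∀ v : CsSp dcs, ‖Df 0 (0, v)‖ ≤ Real.exp δ0 * ‖v‖
  lip_nonlinear : ∀ δ' : ℝ, 0 < δ' → δ' ≤ δ →
      LipschitzOnWith δ'.toNNReal (fun z => f z - Df 0 z)
        (closedBall (0 : PSp du dcs) (δ' / ℓ))

/-- `g` (with derivative field `Dg`) is `C^{1+Lip}` on the ball `B^u(r)`, with Lipschitz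
constant `≤ K` and with `Lip(dg) ≤ a`. -/
structure IsC1LipGraph (du dcs : ℕ) (r K a : ℝ)
    (g : EuSp du → CsSp dcs) (Dg : EuSp du → (EuSp du →L[ℝ] CsSp dcs)) : Prop where
  hasDeriv : ∀ u ∈ closedBall (0 : EuSp du) r,
      HasFDerivWithinAt g (Dg u) (closedBall (0 : EuSp du) r) u
  lip : LipschitzOnWith K.toNNReal g (closedBall (0 : EuSp du) r)
  lipDeriv : LipschitzOnWith a.toNNReal Dg (closedBall (0 : EuSp du) r)

/-!
On its ball a chart is a `δ`-perturbation of a hyperbolic linear map with rates `b < a`. Hence it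
maps secants lying in the cone `‖y‖ ≤ κ ‖x‖` into that cone and stretches their first coordinates
by at least `a - δ`, so that the image of a graph with secants in the cone covers such a graph over
a ball larger by the factor `a - δ`. Curvature is multiplied by about `b / a ^ 2` and increased by
a multiple of `ℓ`, so the bound `C ℓ` passes from one chart to the next once `C` is large.

For each `n` the graphs satisfying these bounds form a compact set for pointwise convergence, and
being covered by the image is a closed relation between consecutive sets in which every graph has a
successor. By compactness there is a complete backward sequence of graphs, each covered by the
image of the one before it in time.

Two families with the covering property satisfy `‖g n u - g' n u‖ ≤ 2 ‖u‖`. Pulling this estimate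
back through `m` charts improves it by `θ ^ m` with a uniform `θ < 1`, so the families agree.
-/

open scoped NNReal

section Calculus

variable {X Y : Type*} [NormedAddCommGroup X] [NormedSpace ℝ X]
  [NormedAddCommGroup Y] [NormedSpace ℝ Y]
  {f : X → Y} {f' : X → X →L[ℝ] Y} {s : Set X} {K : ℝ≥0}

lemma norm_taylor_le_of_lipschitzOnWith (hs : Convex ℝ s)
    (hf : ∀ x ∈ s, HasFDerivWithinAt f (f' x) s x) (hf' : LipschitzOnWith K f' s)
    {x y : X} (hx : x ∈ s) (hy : y ∈ s) :
    ‖f y - f x - f' x (y - x)‖ ≤ K * ‖y - x‖ ^ 2 := by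
  have hseg : segment ℝ x y ⊆ s := hs.segment_subset hx hy
  have hbound : ∀ z ∈ segment ℝ x y, ‖f' z - f' x‖ ≤ K * ‖y - x‖ := fun z hz =>
    (hf'.norm_sub_le (hseg hz) hx).trans <| by gcongr; exact norm_sub_le_of_mem_segment hz
  calc ‖f y - f x - f' x (y - x)‖
      ≤ K * ‖y - x‖ * ‖y - x‖ :=
        (convex_segment x y).norm_image_sub_le_of_norm_hasFDerivWithin_le'
          (fun z hz => (hf z (hseg hz)).mono hseg) hbound
          (left_mem_segment ℝ x y) (right_mem_segment ℝ x y)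
    _ = K * ‖y - x‖ ^ 2 := by ring

lemma approximatesLinearOn_closedBall_of_lipschitzOnWith {x₀ : X} {r : ℝ} {c : ℝ≥0} (hr : 0 ≤ r)
    (hc : K * r ≤ c)
    (hf : ∀ x ∈ closedBall x₀ r, HasFDerivWithinAt f (f' x) (closedBall x₀ r) x)
    (hf' : LipschitzOnWith K f' (closedBall x₀ r)) :
    ApproximatesLinearOn f (f' x₀) (closedBall x₀ r) c := by
  intro y hy z hz
  refine (convex_closedBall x₀ r).norm_image_sub_le_of_norm_hasFDerivWithin_le' hf
    (fun x hx => ?_) hz hy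
  calc ‖f' x - f' x₀‖ ≤ K * ‖x - x₀‖ := hf'.norm_sub_le hx (mem_closedBall_self hr)
    _ ≤ K * r := by gcongr; exact mem_closedBall_iff_norm.1 hx
    _ ≤ c := hc

lemma hasFDerivWithinAt_of_norm_taylor_le {T : X →L[ℝ] Y} {M : ℝ} {x : X}
    (h : ∀ y ∈ s, ‖f y - f x - T (y - x)‖ ≤ M * ‖y - x‖ ^ 2) : HasFDerivWithinAt f T s x := by
  rw [hasFDerivWithinAt_iff_isLittleO]
  have hO : (fun y => f y - f x - T (y - x)) =O[nhdsWithin x s] fun y => ‖y - x‖ ^ 2 :=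
    .of_bound M <| by
      filter_upwards [self_mem_nhdsWithin] with y hy
      simpa using h y hy
  exact hO.trans_isLittleO
    ((Asymptotics.isLittleO_pow_sub_sub x one_lt_two).mono nhdsWithin_le_nhds)

end Calculus

section ExpandingMap

variable {E : Type*} [NormedAddCommGroup E] [NormedSpace ℝ E] [FiniteDimensional ℝ E]
  {m : ℝ} {A : E →L[ℝ] E}

lemma isInvertible_of_expanding (hm : 0 < m) (hA : ∀ x, m * ‖x‖ ≤ ‖A x‖) : A.IsInvertible := by
  have hinj : Function.Injective A := by
    refine (injective_iff_map_eq_zero A).2 fun x hx => norm_le_zero_iff.1 ?_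
    have := hA x
    rw [hx, norm_zero] at this
    exact nonpos_of_mul_nonpos_right this hm
  exact ⟨(LinearEquiv.ofInjectiveEndo (A : E →ₗ[ℝ] E) hinj).toContinuousLinearEquiv, rfl⟩

lemma surjOn_closedBall_of_approximates_expanding {φ : E → E} {c : ℝ≥0} {x : E} {r : ℝ}
    (hm : 0 < m) (hA : ∀ x, m * ‖x‖ ≤ ‖A x‖) (hr : 0 ≤ r)
    (hφ : ApproximatesLinearOn φ A (closedBall x r) c) :
    SurjOn φ (closedBall x r) (closedBall (φ x) ((m - c) * r)) := by
  have hinv := isInvertible_of_expanding hm hA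
  have hbound (y : E) : ‖A.inverse y‖ ≤ m⁻¹.toNNReal * ‖y‖ := by
    rw [Real.coe_toNNReal _ (inv_nonneg.2 hm.le), le_inv_mul_iff₀ hm]
    simpa only [hinv.self_apply_inverse] using hA (A.inverse y)
  have hsurj := hφ.surjOn_closedBall_of_nonlinearRightInverse
    ⟨A.inverse, m⁻¹.toNNReal, hbound, hinv.self_apply_inverse⟩ hr subset_rfl
  rwa [Real.coe_toNNReal _ (inv_nonneg.2 hm.le), inv_inv] at hsurj

end ExpandingMap

lemma exists_seq_of_isClosed_rel {X : Type*} [TopologicalSpace X] [T2Space X] {S : ℕ → Set X}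
    {R : ℕ → X → X → Prop} (hS : ∀ n, IsCompact (S n)) (hne : ∀ n, (S n).Nonempty)
    (hR : ∀ n, IsClosed {p : X × X | p ∈ S (n + 1) ×ˢ S n ∧ R n p.1 p.2})
    (hstep : ∀ n, ∀ x ∈ S (n + 1), ∃ y ∈ S n, R n x y) :
    ∃ s : ℕ → X, ∀ n, s n ∈ S n ∧ R n (s (n + 1)) (s n) := by
  let K (N : ℕ) : Set (ℕ → X) := {s | s ∈ univ.pi S ∧ ∀ n < N, R n (s (n + 1)) (s n)}
  have hpi : IsCompact (univ.pi S) := isCompact_univ_pi hS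
  have hK_closed (N : ℕ) : IsClosed (K N) := by
    have hK : K N = univ.pi S ∩ ⋂ n < N, (fun s : ℕ → X => (s (n + 1), s n)) ⁻¹'
        {p | p ∈ S (n + 1) ×ˢ S n ∧ R n p.1 p.2} := by
      ext s
      simp +contextual [K]
    rw [hK]
    exact hpi.isClosed.inter <|
      isClosed_biInter fun n _ => (hR n).preimage (by fun_prop)
  have hK_extend (N : ℕ) : ∀ s ∈ univ.pi S, ∃ t ∈ K N, ∀ n ≥ N, t n = s n := by
    induction N with
    | zero => exact fun s hs => ⟨s, ⟨hs, by simp⟩, fun _ _ => rfl⟩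
    | succ N ih =>
      intro s hs
      obtain ⟨y, hy, hRy⟩ := hstep N (s (N + 1)) (hs _ trivial)
      obtain ⟨t, ⟨htS, htR⟩, hts⟩ :=
        ih (Function.update s N y) ((update_mem_pi_iff_of_mem hs).2 fun _ => hy)
      have htN : t N = y := by simpa using hts N le_rfl
      have ht (n : ℕ) (hn : n ≥ N + 1) : t n = s n := by
        simpa [show n ≠ N by omega] using hts n (by omega)
      refine ⟨t, ⟨htS, fun n hn => ?_⟩, ht⟩
      obtain hlt | rfl := Nat.lt_succ_iff_lt_or_eq.1 hn
      · exact htR n hlt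
      · rwa [htN, ht _ le_rfl]
  choose s₀ hs₀ using hne
  obtain ⟨s, hs⟩ := IsCompact.nonempty_iInter_of_sequence_nonempty_isCompact_isClosed K
    (fun N s hs => ⟨hs.1, fun n hn => hs.2 n (hn.trans N.lt_succ_self)⟩)
    (fun N => (hK_extend N s₀ fun n _ => hs₀ n).imp fun _ ht => ht.1)
    (hpi.of_isClosed_subset (hK_closed 0) fun _ hs => hs.1) hK_closed
  rw [mem_iInter] at hs
  exact ⟨s, fun n => ⟨(hs 0).1 n trivial, (hs (n + 1)).2 n n.lt_succ_self⟩⟩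

section HyperbolicSplitting

lemma norm_eq_norm_fst_of_cone {E V : Type*} [SeminormedAddCommGroup E] [SeminormedAddCommGroup V]
    {κ : ℝ} {p : E × V} (hκ : κ ≤ 1) (hp : ‖p.2‖ ≤ κ * ‖p.1‖) : ‖p‖ = ‖p.1‖ :=
  max_eq_left (hp.trans (mul_le_of_le_one_left (norm_nonneg _) hκ))

variable {E V : Type*} [NormedAddCommGroup E] [NormedSpace ℝ E]
  [NormedAddCommGroup V] [NormedSpace ℝ V]

/-- The linear map `B` preserves the splitting `E × V`, expands `E` at rate at least `a` and
stretches `V` by at most `b`. -/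
structure IsHyperbolic (a b : ℝ) (B : E × V →L[ℝ] E × V) : Prop where
  snd_apply_inl : ∀ x, (B (x, 0)).2 = 0
  fst_apply_inr : ∀ y, (B (0, y)).1 = 0
  expand : ∀ x, a * ‖x‖ ≤ ‖B (x, 0)‖
  contract : ∀ y, ‖B (0, y)‖ ≤ b * ‖y‖

/-- The diagonal block `E → E` of a linear map of `E × V`. -/
def unstableBlock (B : E × V →L[ℝ] E × V) : E →L[ℝ] E :=
  .fst ℝ E V ∘L B ∘L .inl ℝ E V

/-- The constants for which a `δ`-perturbation of a hyperbolic map with rates `a`, `b` expands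
the first coordinate of, and leaves invariant, the cone `‖y‖ ≤ κ ‖x‖`. -/
structure ConeCondition (a b δ : ℝ) (κ : ℝ≥0) : Prop where
  b_nonneg : 0 ≤ b
  δ_nonneg : 0 ≤ δ
  δ_lt : δ < a
  κ_le_one : (κ : ℝ) ≤ 1
  invariant : b * κ + δ ≤ κ * (a - δ)

variable {a b δ : ℝ} {κ : ℝ≥0} {B P : E × V →L[ℝ] E × V} {p q : E × V}

namespace IsHyperbolic

lemma fst_apply (hB : IsHyperbolic a b B) (p : E × V) : (B p).1 = unstableBlock B p.1 := by
  have hp : p = (p.1, 0) + (0, p.2) := by simp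
  conv_lhs => rw [hp, map_add, Prod.fst_add, hB.fst_apply_inr, add_zero]
  rfl

lemma norm_snd_apply_le (hB : IsHyperbolic a b B) (p : E × V) : ‖(B p).2‖ ≤ b * ‖p.2‖ := by
  have hp : p = (p.1, 0) + (0, p.2) := by simp
  conv_lhs => rw [hp, map_add, Prod.snd_add, hB.snd_apply_inl, zero_add]
  exact (norm_snd_le _).trans (hB.contract _)

lemma le_norm_unstableBlock (hB : IsHyperbolic a b B) (x : E) :
    a * ‖x‖ ≤ ‖unstableBlock B x‖ := by
  have hnorm : ‖B (x, 0)‖ = ‖unstableBlock B x‖ := by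
    rw [Prod.norm_def, hB.snd_apply_inl, norm_zero, max_eq_left (norm_nonneg _)]
    rfl
  exact hnorm ▸ hB.expand x

lemma norm_fst_sub_le (hB : IsHyperbolic a b B) (hq : ‖q - B p‖ ≤ δ * ‖p‖) :
    ‖q.1 - unstableBlock B p.1‖ ≤ δ * ‖p‖ := by
  rw [← hB.fst_apply]
  exact (norm_fst_le (q - B p)).trans hq

lemma norm_snd_le (hB : IsHyperbolic a b B) (hq : ‖q - B p‖ ≤ δ * ‖p‖) :
    ‖q.2‖ ≤ b * ‖p.2‖ + δ * ‖p‖ :=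
  calc ‖q.2‖ ≤ ‖(B p).2‖ + ‖(q - B p).2‖ := norm_le_norm_add_norm_sub' q.2 (B p).2
    _ ≤ b * ‖p.2‖ + δ * ‖p‖ :=
      add_le_add (hB.norm_snd_apply_le p) ((_root_.norm_snd_le _).trans hq)

lemma mul_norm_fst_le (hB : IsHyperbolic a b B) (hq : ‖q - B p‖ ≤ δ * ‖p‖) :
    a * ‖p.1‖ ≤ ‖q.1‖ + δ * ‖p‖ :=
  calc a * ‖p.1‖ ≤ ‖unstableBlock B p.1‖ := hB.le_norm_unstableBlock p.1
    _ ≤ ‖q.1‖ + ‖q.1 - unstableBlock B p.1‖ := norm_le_norm_add_norm_sub _ _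
    _ ≤ ‖q.1‖ + δ * ‖p‖ := by gcongr; exact hB.norm_fst_sub_le hq

lemma mul_norm_fst_le_of_cone (hB : IsHyperbolic a b B) (hκ : (κ : ℝ) ≤ 1)
    (hq : ‖q - B p‖ ≤ δ * ‖p‖) (hp : ‖p.2‖ ≤ κ * ‖p.1‖) : (a - δ) * ‖p.1‖ ≤ ‖q.1‖ := by
  have := hB.mul_norm_fst_le hq
  rw [norm_eq_norm_fst_of_cone hκ hp] at this
  linarith

lemma cone_invariant (hB : IsHyperbolic a b B) (hc : ConeCondition a b δ κ)
    (hq : ‖q - B p‖ ≤ δ * ‖p‖) (hp : ‖p.2‖ ≤ κ * ‖p.1‖) : ‖q.2‖ ≤ κ * ‖q.1‖ := by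
  have hb := hc.b_nonneg
  calc ‖q.2‖ ≤ b * ‖p.2‖ + δ * ‖p‖ := hB.norm_snd_le hq
    _ ≤ b * (κ * ‖p.1‖) + δ * ‖p.1‖ := by
      rw [norm_eq_norm_fst_of_cone hc.κ_le_one hp]; gcongr
    _ = (b * κ + δ) * ‖p.1‖ := by ring
    _ ≤ κ * (a - δ) * ‖p.1‖ := by gcongr; exact hc.invariant
    _ = κ * ((a - δ) * ‖p.1‖) := by ring
    _ ≤ κ * ‖q.1‖ := by gcongr; exact hB.mul_norm_fst_le_of_cone hc.κ_le_one hq hp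

lemma of_fst_eq_zero (hB : IsHyperbolic a b B) (hδa : δ < a)
    (hq : ‖q - B p‖ ≤ δ * ‖p‖) (hq1 : q.1 = 0) :
    a * ‖p.1‖ ≤ δ * ‖p.2‖ ∧ ‖q.2‖ ≤ (b + δ) * ‖p.2‖ := by
  have hfst : a * ‖p.1‖ ≤ δ * ‖p‖ := by simpa [hq1] using hB.mul_norm_fst_le hq
  have hle : ‖p.1‖ ≤ ‖p.2‖ := by
    by_contra! hlt
    rw [show ‖p‖ = ‖p.1‖ from max_eq_left hlt.le] at hfst
    exact hfst.not_gt (mul_lt_mul_of_pos_right hδa ((norm_nonneg _).trans_lt hlt))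
  have hp : ‖p‖ = ‖p.2‖ := max_eq_right hle
  have hsnd := hB.norm_snd_le hq
  rw [hp] at hfst hsnd
  exact ⟨hfst, by linarith⟩

end IsHyperbolic

/-- The slope of the image under `P` of the graph of `S`; meaningful when that image is again a
graph over `E`, as `ContinuousLinearMap.inverse` is `0` on non-invertible maps. -/
def imageSlope (P : E × V →L[ℝ] E × V) (S : E →L[ℝ] V) : E →L[ℝ] V :=
  (.snd ℝ E V ∘L P ∘L (ContinuousLinearMap.id ℝ E).prod S) ∘L
    (.fst ℝ E V ∘L P ∘L (ContinuousLinearMap.id ℝ E).prod S).inverse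

variable {S : E →L[ℝ] V}

lemma norm_mk_slope_eq (hκ : (κ : ℝ) ≤ 1) (hS : ‖S‖ ≤ κ) (x : E) : ‖(x, S x)‖ = ‖x‖ :=
  norm_eq_norm_fst_of_cone hκ (S.le_of_opNorm_le hS x)

lemma mul_norm_le_norm_fst_apply_graph (hc : ConeCondition a b δ κ) (hB : IsHyperbolic a b B)
    (hP : ‖P - B‖ ≤ δ) (hS : ‖S‖ ≤ κ) (x : E) : (a - δ) * ‖x‖ ≤ ‖(P (x, S x)).1‖ :=
  hB.mul_norm_fst_le_of_cone hc.κ_le_one ((P - B).le_of_opNorm_le hP (x, S x))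
    (S.le_of_opNorm_le hS x)

section

variable [FiniteDimensional ℝ E]

lemma isInvertible_fst_comp_graph (hc : ConeCondition a b δ κ) (hB : IsHyperbolic a b B)
    (hP : ‖P - B‖ ≤ δ) (hS : ‖S‖ ≤ κ) :
    (.fst ℝ E V ∘L P ∘L (ContinuousLinearMap.id ℝ E).prod S).IsInvertible :=
  isInvertible_of_expanding (sub_pos.2 hc.δ_lt) (mul_norm_le_norm_fst_apply_graph hc hB hP hS)

lemma imageSlope_apply (hc : ConeCondition a b δ κ) (hB : IsHyperbolic a b B)
    (hP : ‖P - B‖ ≤ δ) (hS : ‖S‖ ≤ κ) (x : E) :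
    imageSlope P S (P (x, S x)).1 = (P (x, S x)).2 :=
  congrArg (fun x => (P (x, S x)).2)
    ((isInvertible_fst_comp_graph hc hB hP hS).inverse_apply_self x)

lemma exists_fst_apply_graph_eq (hc : ConeCondition a b δ κ) (hB : IsHyperbolic a b B)
    (hP : ‖P - B‖ ≤ δ) (hS : ‖S‖ ≤ κ) (y : E) : ∃ x, (P (x, S x)).1 = y :=
  (isInvertible_fst_comp_graph hc hB hP hS).surjective y

lemma norm_imageSlope_le (hc : ConeCondition a b δ κ) (hB : IsHyperbolic a b B)
    (hP : ‖P - B‖ ≤ δ) (hS : ‖S‖ ≤ κ) : ‖imageSlope P S‖ ≤ κ := by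
  refine ContinuousLinearMap.opNorm_le_bound _ κ.2 fun y => ?_
  obtain ⟨x, rfl⟩ := exists_fst_apply_graph_eq hc hB hP hS y
  rw [imageSlope_apply hc hB hP hS]
  exact hB.cone_invariant hc ((P - B).le_of_opNorm_le hP (x, S x)) (S.le_of_opNorm_le hS x)

lemma imageSlope_zero (hc : ConeCondition a b δ κ) (hB : IsHyperbolic a b B) :
    imageSlope B 0 = 0 := by
  have hBB : ‖B - B‖ ≤ δ := by simpa using hc.δ_nonneg
  have h0 : ‖(0 : E →L[ℝ] V)‖ ≤ κ := by simp
  ext1 y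
  obtain ⟨x, rfl⟩ := exists_fst_apply_graph_eq hc hB hBB h0 y
  rw [imageSlope_apply hc hB hBB h0]
  exact hB.snd_apply_inl x

lemma norm_snd_sub_imageSlope_le (hc : ConeCondition a b δ κ) (hB : IsHyperbolic a b B)
    (hP : ‖P - B‖ ≤ δ) (hS : ‖S‖ ≤ κ) {x : E} {y : V} {ε η : ℝ}
    (hq : ‖q - P (x, S x + y)‖ ≤ ε) (hy : ‖y‖ ≤ η) :
    ‖q.2 - imageSlope P S q.1‖ ≤ (1 + κ) * ε + (b + (1 + κ) * δ) * η := by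
  set T := imageSlope P S
  set e := q - P (x, S x + y)
  have hT (z : E) : ‖T z‖ ≤ κ * ‖z‖ := T.le_of_opNorm_le (norm_imageSlope_le hc hB hP hS) z
  have hPy : ‖P (0, y) - B (0, y)‖ ≤ δ * ‖((0 : E), y)‖ := (P - B).le_of_opNorm_le hP _
  have hPy1 := hB.norm_fst_sub_le hPy
  have hPy2 := hB.norm_snd_le hPy
  simp only [map_zero, sub_zero, Prod.norm_mk, norm_zero, norm_nonneg, sup_of_le_right]
    at hPy1 hPy2
  have hq_eq : q = e + P (x, S x) + P (0, y) := by
    have hxy : (x, S x + y) = (x, S x) + (0, y) := by simp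
    simp only [e, hxy, map_add]
    abel
  have hsub : q.2 - T q.1 = (e.2 - T e.1) + ((P (0, y)).2 - T (P (0, y)).1) := by
    rw [hq_eq]
    simp only [Prod.fst_add, Prod.snd_add, map_add, T, imageSlope_apply hc hB hP hS]
    abel
  have he : ‖e.2 - T e.1‖ ≤ (1 + κ) * ε :=
    calc ‖e.2 - T e.1‖ ≤ ‖e.2‖ + κ * ‖e.1‖ := (norm_sub_le _ _).trans (by gcongr; exact hT _)
      _ ≤ ε + κ * ε := by
        gcongr
        · exact (norm_snd_le e).trans hq
        · exact (norm_fst_le e).trans hq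
      _ = (1 + κ) * ε := by ring
  have hδ := hc.δ_nonneg
  have hb := hc.b_nonneg
  have hPT : ‖(P (0, y)).2 - T (P (0, y)).1‖ ≤ (b + (1 + κ) * δ) * η :=
    calc ‖(P (0, y)).2 - T (P (0, y)).1‖
        ≤ ‖(P (0, y)).2‖ + κ * ‖(P (0, y)).1‖ := (norm_sub_le _ _).trans (by gcongr; exact hT _)
      _ ≤ (b * ‖y‖ + δ * ‖y‖) + κ * (δ * ‖y‖) := by gcongr
      _ = (b + (1 + κ) * δ) * ‖y‖ := by ring
      _ ≤ (b + (1 + κ) * δ) * η := by gcongr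
  rw [hsub]
  exact (norm_add_le _ _).trans (add_le_add he hPT)

-- Up to the error from replacing `P`, the tangent vector `P (x, S x)` to one image graph is
-- the image under `P'` of a vector at height `(S - S') x` above the graph of `S'`.
lemma norm_imageSlope_sub_le (hc : ConeCondition a b δ κ) (hB : IsHyperbolic a b B)
    {P' : E × V →L[ℝ] E × V} {S' : E →L[ℝ] V} (hP : ‖P - B‖ ≤ δ) (hS : ‖S‖ ≤ κ)
    (hP' : ‖P' - B‖ ≤ δ) (hS' : ‖S'‖ ≤ κ) {ε η : ℝ} (hε : ‖P - P'‖ ≤ ε) (hη : ‖S - S'‖ ≤ η) :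
    ‖imageSlope P S - imageSlope P' S'‖ ≤ ((1 + κ) * ε + (b + (1 + κ) * δ) * η) / (a - δ) := by
  have ha : 0 < a - δ := sub_pos.2 hc.δ_lt
  have hδ := hc.δ_nonneg
  have hb := hc.b_nonneg
  have hε0 : 0 ≤ ε := (norm_nonneg _).trans hε
  have hη0 : 0 ≤ η := (norm_nonneg _).trans hη
  refine ContinuousLinearMap.opNorm_le_bound _ (by positivity) fun y => ?_
  obtain ⟨x, rfl⟩ := exists_fst_apply_graph_eq hc hB hP hS y
  have hPx : ‖P (x, S x) - P' (x, S' x + (S - S') x)‖ ≤ ε * ‖x‖ := by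
    simpa [norm_mk_slope_eq hc.κ_le_one hS] using (P - P').le_of_opNorm_le hε (x, S x)
  rw [sub_apply, imageSlope_apply hc hB hP hS]
  calc ‖(P (x, S x)).2 - imageSlope P' S' (P (x, S x)).1‖
      ≤ (1 + κ) * (ε * ‖x‖) + (b + (1 + κ) * δ) * (η * ‖x‖) :=
        norm_snd_sub_imageSlope_le hc hB hP' hS' hPx ((S - S').le_of_opNorm_le hη x)
    _ = ((1 + κ) * ε + (b + (1 + κ) * δ) * η) / (a - δ) * ((a - δ) * ‖x‖) := by
        field_simp
    _ ≤ ((1 + κ) * ε + (b + (1 + κ) * δ) * η) / (a - δ) * ‖(P (x, S x)).1‖ := by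
        gcongr
        exact mul_norm_le_norm_fst_apply_graph hc hB hP hS x

end

end HyperbolicSplitting

section ConeGraphs

variable {E V : Type*} [NormedAddCommGroup E]

/-- The graph of `g : E → V` over the closed `r`-ball; this is `uGraph` for normed spaces. -/
def ballGraph (r : ℝ) (g : E → V) : Set (E × V) :=
  {p | p.1 ∈ closedBall (0 : E) r ∧ p.2 = g p.1}

lemma mk_mem_ballGraph {r : ℝ} {g : E → V} {u : E} (hu : u ∈ closedBall 0 r) :
    (u, g u) ∈ ballGraph r g :=
  ⟨hu, rfl⟩

variable [NormedAddCommGroup V]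

/-- The graph of `g` over the closed `r`-ball passes through the origin and its secants lie in the
cone `‖y‖ ≤ κ ‖x‖`. -/
structure IsConeGraph (κ : ℝ≥0) (r : ℝ) (g : E → V) : Prop where
  map_zero : g 0 = 0
  lipschitz : LipschitzOnWith κ g (closedBall (0 : E) r)

/-- The family of local unstable manifolds of the backward sequence `F`: cone graphs of radius
`r n`, each covered by the image of the next one. As in the main theorem, the index `n` stands for
the time `-n`. -/
structure IsUnstableFamily (κ : ℝ≥0) (r : ℕ → ℝ) (F : ℕ → E × V → E × V) (g : ℕ → E → V) :
    Prop where
  isConeGraph : ∀ n, IsConeGraph κ (r n) (g n)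
  ballGraph_subset : ∀ n, ballGraph (r n) (g n) ⊆ F n '' ballGraph (r (n + 1)) (g (n + 1))

variable {κ : ℝ≥0} {r : ℝ} {g : E → V} {z z' : E × V}

namespace IsConeGraph

lemma norm_snd_sub_le (hg : IsConeGraph κ r g) (hz : z ∈ ballGraph r g)
    (hz' : z' ∈ ballGraph r g) : ‖(z - z').2‖ ≤ κ * ‖(z - z').1‖ := by
  rw [Prod.snd_sub, Prod.fst_sub, hz.2, hz'.2]
  exact hg.lipschitz.norm_sub_le hz.1 hz'.1

lemma norm_le (hg : IsConeGraph κ r g) {u : E} (hu : u ∈ closedBall 0 r) :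
    ‖g u‖ ≤ κ * ‖u‖ := by
  simpa [hg.map_zero] using
    hg.lipschitz.norm_sub_le hu (mem_closedBall_self (nonempty_closedBall.1 ⟨u, hu⟩))

lemma ballGraph_subset_closedBall (hg : IsConeGraph κ r g) (hκ : (κ : ℝ) ≤ 1) :
    ballGraph r g ⊆ closedBall 0 r := by
  intro z hz
  have hcone : ‖z.2‖ ≤ κ * ‖z.1‖ := hz.2 ▸ hg.norm_le hz.1
  rw [mem_closedBall_zero_iff, norm_eq_norm_fst_of_cone hκ hcone]
  exact mem_closedBall_zero_iff.1 hz.1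

lemma zero_mem_ballGraph (hg : IsConeGraph κ r g) (hr : 0 ≤ r) : (0 : E × V) ∈ ballGraph r g :=
  ⟨mem_closedBall_self hr, hg.map_zero.symm⟩

end IsConeGraph

end ConeGraphs

section Charts

variable {E V : Type*} [NormedAddCommGroup E] [NormedSpace ℝ E]
  [NormedAddCommGroup V] [NormedSpace ℝ V]

/-- A hyperbolic chart map with rates `a`, `b` in place of `e^λ`, `e^{δ₀}`. The Lipschitz bound on
its nonlinear part is `HyperbolicChart.norm_sub_sub_le`. -/
structure HyperbolicChart (a b ℓ δ : ℝ) (f : E × V → E × V)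
    (Df : E × V → (E × V →L[ℝ] E × V)) : Prop where
  map_zero : f 0 = 0
  hasDeriv : ∀ z ∈ closedBall (0 : E × V) (δ / ℓ),
    HasFDerivWithinAt f (Df z) (closedBall (0 : E × V) (δ / ℓ)) z
  lipDeriv : LipschitzOnWith ℓ.toNNReal Df (closedBall (0 : E × V) (δ / ℓ))
  hyperbolic : IsHyperbolic a b (Df 0)

lemma IsChartMap.hyperbolicChart {du dcs : ℕ} {lam δ0 ℓ δ : ℝ} {f : PSp du dcs → PSp du dcs}
    {Df : PSp du dcs → (PSp du dcs →L[ℝ] PSp du dcs)} (hf : IsChartMap du dcs lam δ0 ℓ δ f Df) :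
    HyperbolicChart (Real.exp lam) (Real.exp δ0) ℓ δ f Df where
  map_zero := hf.map_zero
  hasDeriv := hf.hasDeriv
  lipDeriv := hf.lipDeriv
  hyperbolic := ⟨hf.deriv_zero_mapsU, hf.deriv_zero_mapsCs, hf.expand, hf.contract⟩

/-- The factor by which passing to the image contracts the vertical distance between two cone
graphs, relative to the distance to the origin. -/
def contractionFactor (a b δ : ℝ) : ℝ :=
  (b + δ) * a / (a - δ) ^ 2

variable {a b δ ℓ : ℝ} {κ : ℝ≥0} {f : E × V → E × V} {Df : E × V → (E × V →L[ℝ] E × V)}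
  {g g' : E → V} {z z' : E × V}

namespace HyperbolicChart

lemma norm_sub_sub_le (hf : HyperbolicChart a b ℓ δ f Df) (hδ : 0 ≤ δ)
    (hℓ : 0 < ℓ) (hz : z ∈ closedBall 0 (δ / ℓ)) (hz' : z' ∈ closedBall 0 (δ / ℓ)) :
    ‖f z - f z' - Df 0 (z - z')‖ ≤ δ * ‖z - z'‖ := by
  have happrox := approximatesLinearOn_closedBall_of_lipschitzOnWith (c := δ.toNNReal)
    (by positivity) (by simp [hδ, hℓ.le, mul_div_cancel₀ δ hℓ.ne']) hf.hasDeriv hf.lipDeriv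
  simpa [hδ] using happrox _ hz _ hz'

lemma norm_deriv_sub_le (hf : HyperbolicChart a b ℓ δ f Df) (hδ : 0 ≤ δ)
    (hℓ : 0 < ℓ) (hz : z ∈ closedBall 0 (δ / ℓ)) : ‖Df z - Df 0‖ ≤ δ :=
  calc ‖Df z - Df 0‖ ≤ ℓ.toNNReal * ‖z - 0‖ :=
        hf.lipDeriv.norm_sub_le hz (mem_closedBall_self (div_nonneg hδ hℓ.le))
    _ ≤ ℓ * (δ / ℓ) := by
        rw [Real.coe_toNNReal _ hℓ.le, sub_zero]
        gcongr
        exact mem_closedBall_zero_iff.1 hz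
    _ = δ := mul_div_cancel₀ δ hℓ.ne'

section ConeGraph

variable (hf : HyperbolicChart a b ℓ δ f Df) (hc : ConeCondition a b δ κ) (hℓ : 0 < ℓ)
  (hg : IsConeGraph κ (δ / ℓ) g)

include hf hc hℓ hg

lemma norm_secant_sub_le (hz : z ∈ ballGraph (δ / ℓ) g) (hz' : z' ∈ ballGraph (δ / ℓ) g) :
    ‖f z - f z' - Df 0 (z - z')‖ ≤ δ * ‖z - z'‖ :=
  hf.norm_sub_sub_le hc.δ_nonneg hℓ (hg.ballGraph_subset_closedBall hc.κ_le_one hz)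
    (hg.ballGraph_subset_closedBall hc.κ_le_one hz')

lemma mul_norm_fst_sub_le (hz : z ∈ ballGraph (δ / ℓ) g) (hz' : z' ∈ ballGraph (δ / ℓ) g) :
    (a - δ) * ‖z.1 - z'.1‖ ≤ ‖(f z).1 - (f z').1‖ :=
  hf.hyperbolic.mul_norm_fst_le_of_cone hc.κ_le_one (hf.norm_secant_sub_le hc hℓ hg hz hz')
    (hg.norm_snd_sub_le hz hz')

lemma norm_snd_sub_le (hz : z ∈ ballGraph (δ / ℓ) g) (hz' : z' ∈ ballGraph (δ / ℓ) g) :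
    ‖(f z).2 - (f z').2‖ ≤ κ * ‖(f z).1 - (f z').1‖ :=
  hf.hyperbolic.cone_invariant hc (hf.norm_secant_sub_le hc hℓ hg hz hz')
    (hg.norm_snd_sub_le hz hz')

lemma mul_norm_sub_le (hz : z ∈ ballGraph (δ / ℓ) g) (hz' : z' ∈ ballGraph (δ / ℓ) g) :
    (a - δ) * ‖z - z'‖ ≤ ‖f z - f z'‖ := by
  rw [norm_eq_norm_fst_of_cone hc.κ_le_one (hg.norm_snd_sub_le hz hz')]
  exact (hf.mul_norm_fst_sub_le hc hℓ hg hz hz').trans (norm_fst_le (f z - f z'))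

lemma mul_norm_fst_le (hz : z ∈ ballGraph (δ / ℓ) g) : (a - δ) * ‖z.1‖ ≤ ‖(f z).1‖ := by
  simpa [hf.map_zero] using hf.mul_norm_fst_sub_le hc hℓ hg hz
    (hg.zero_mem_ballGraph (div_nonneg hc.δ_nonneg hℓ.le))

lemma norm_snd_sub_le_of_fst_eq (hg' : IsConeGraph κ (δ / ℓ) g') {c : ℝ} (hc0 : 0 ≤ c)
    (hgg' : ∀ w ∈ closedBall 0 (δ / ℓ), ‖g w - g' w‖ ≤ c * ‖w‖)
    (hz : z ∈ ballGraph (δ / ℓ) g) (hz' : z' ∈ ballGraph (δ / ℓ) g')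
    (hfst : (f z).1 = (f z').1) :
    ‖(f z).2 - (f z').2‖ ≤ contractionFactor a b δ * (c * ‖(f z).1‖) := by
  have ha : 0 < a - δ := sub_pos.2 hc.δ_lt
  have hκ : (κ : ℝ) ≤ 1 := hc.κ_le_one
  obtain ⟨hx, hy⟩ := hf.hyperbolic.of_fst_eq_zero hc.δ_lt
    (hf.norm_sub_sub_le hc.δ_nonneg hℓ (hg.ballGraph_subset_closedBall hκ hz)
      (hg'.ballGraph_subset_closedBall hκ hz')) (sub_eq_zero.2 hfst)
  simp only [Prod.fst_sub, Prod.snd_sub] at hx hy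
  have hvert : ‖z.2 - z'.2‖ ≤ c * ‖z.1‖ + ‖z.1 - z'.1‖ := by
    rw [hz.2, hz'.2]
    calc ‖g z.1 - g' z'.1‖
        ≤ ‖g z.1 - g' z.1‖ + ‖g' z.1 - g' z'.1‖ := norm_sub_le_norm_sub_add_norm_sub ..
      _ ≤ c * ‖z.1‖ + κ * ‖z.1 - z'.1‖ :=
        add_le_add (hgg' _ hz.1) (hg'.lipschitz.norm_sub_le hz.1 hz'.1)
      _ ≤ c * ‖z.1‖ + ‖z.1 - z'.1‖ := by gcongr; exact mul_le_of_le_one_left (norm_nonneg _) hκ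
  have hexp : c * ((a - δ) * ‖z.1‖) ≤ c * ‖(f z).1‖ := by
    gcongr
    exact hf.mul_norm_fst_le hc hℓ hg hz
  have hb := hc.b_nonneg
  have hδ := hc.δ_nonneg
  have ha0 : 0 ≤ a := by linarith
  have hvert' : (a - δ) * ‖z.2 - z'.2‖ ≤ a * (c * ‖z.1‖) := by
    linarith [mul_le_mul_of_nonneg_left hvert ha0]
  calc ‖(f z).2 - (f z').2‖
      ≤ (b + δ) * ‖z.2 - z'.2‖ := hy
    _ = (b + δ) / (a - δ) * ((a - δ) * ‖z.2 - z'.2‖) := by field_simp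
    _ ≤ (b + δ) / (a - δ) * (a * (c * ‖z.1‖)) := by gcongr
    _ = (b + δ) * a / (a - δ) ^ 2 * (c * ((a - δ) * ‖z.1‖)) := by field_simp
    _ ≤ (b + δ) * a / (a - δ) ^ 2 * (c * ‖(f z).1‖) := by gcongr

end ConeGraph

end HyperbolicChart

namespace ConeCondition

lemma contractionFactor_nonneg (hc : ConeCondition a b δ κ) : 0 ≤ contractionFactor a b δ :=
  div_nonneg (mul_nonneg (add_nonneg hc.b_nonneg hc.δ_nonneg) (hc.δ_nonneg.trans hc.δ_lt.le))
    (sq_nonneg _)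

lemma contractionFactor_lt_one (hc : ConeCondition a b δ κ) (hδ : 3 * δ < a - b) :
    contractionFactor a b δ < 1 := by
  have hδ0 := hc.δ_nonneg
  rw [contractionFactor, div_lt_one (pow_pos (sub_pos.2 hc.δ_lt) 2)]
  nlinarith [hc.δ_lt]

end ConeCondition

namespace IsUnstableFamily

variable {L : ℕ → ℝ} {F : ℕ → E × V → E × V} {DF : ℕ → E × V → (E × V →L[ℝ] E × V)}
  {g g' : ℕ → E → V}

lemma norm_sub_le_pow (hc : ConeCondition a b δ κ) (hL : ∀ n, 0 < L n)
    (hF : ∀ n, HyperbolicChart a b (L (n + 1)) δ (F n) (DF n))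
    (hg : IsUnstableFamily κ (fun n => δ / L n) F g)
    (hg' : IsUnstableFamily κ (fun n => δ / L n) F g') (m n : ℕ) {u : E}
    (hu : u ∈ closedBall 0 (δ / L n)) :
    ‖g n u - g' n u‖ ≤ contractionFactor a b δ ^ m * 2 * ‖u‖ := by
  induction m generalizing n u with
  | zero =>
    have hκ : κ * ‖u‖ ≤ ‖u‖ := mul_le_of_le_one_left (norm_nonneg u) hc.κ_le_one
    calc ‖g n u - g' n u‖ ≤ ‖g n u‖ + ‖g' n u‖ := norm_sub_le _ _
      _ ≤ κ * ‖u‖ + κ * ‖u‖ :=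
        add_le_add ((hg.isConeGraph n).norm_le hu) ((hg'.isConeGraph n).norm_le hu)
      _ ≤ contractionFactor a b δ ^ 0 * 2 * ‖u‖ := by linarith
  | succ m ih =>
    obtain ⟨z, hz, hfz⟩ := hg.ballGraph_subset n (mk_mem_ballGraph hu)
    obtain ⟨z', hz', hfz'⟩ := hg'.ballGraph_subset n (mk_mem_ballGraph hu)
    have hstep := (hF n).norm_snd_sub_le_of_fst_eq hc (hL _) (hg.isConeGraph (n + 1))
      (hg'.isConeGraph (n + 1)) (mul_nonneg (pow_nonneg hc.contractionFactor_nonneg m) two_pos.le)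
      (fun w hw => ih (n + 1) hw) hz hz' (by rw [hfz, hfz'])
    rw [hfz, hfz'] at hstep
    exact hstep.trans_eq (by rw [pow_succ']; ring)

lemma eqOn (hc : ConeCondition a b δ κ) (hδ : 3 * δ < a - b) (hL : ∀ n, 0 < L n)
    (hF : ∀ n, HyperbolicChart a b (L (n + 1)) δ (F n) (DF n))
    (hg : IsUnstableFamily κ (fun n => δ / L n) F g)
    (hg' : IsUnstableFamily κ (fun n => δ / L n) F g') (n : ℕ) :
    EqOn (g n) (g' n) (closedBall 0 (δ / L n)) := by
  intro u hu
  have hlim : Filter.Tendsto (fun m => contractionFactor a b δ ^ m * 2 * ‖u‖) Filter.atTop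
      (nhds (0 * 2 * ‖u‖)) :=
    ((tendsto_pow_atTop_nhds_zero_of_lt_one hc.contractionFactor_nonneg
      (hc.contractionFactor_lt_one hδ)).mul_const 2).mul_const ‖u‖
  rw [zero_mul, zero_mul] at hlim
  exact sub_eq_zero.1 <| norm_le_zero_iff.1 <|
    ge_of_tendsto' hlim fun m => hg.norm_sub_le_pow hc hL hF hg' m n hu

end IsUnstableFamily

end Charts

section GraphTransform

variable {E V : Type*} [NormedAddCommGroup E] [NormedSpace ℝ E]
  [NormedAddCommGroup V] [NormedSpace ℝ V]

/-- The graph of `g` over the closed `r`-ball is a cone graph of curvature at most `M`, and `D` is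
the derivative of `g` there, as expressed by a quadratic Taylor estimate. The growth bounds on `g`
and `D` are imposed on all of `E`, so that these pairs form a compact set for pointwise
convergence. -/
structure AdmissibleGraph (κ M : ℝ≥0) (r : ℝ) (g : E → V) (D : E → E →L[ℝ] V) : Prop where
  norm_le : ∀ u, ‖g u‖ ≤ κ * ‖u‖
  norm_deriv_le : ∀ u, ‖D u‖ ≤ κ
  deriv_zero : D 0 = 0
  lipschitz : LipschitzOnWith κ g (closedBall 0 r)
  taylor : ∀ u ∈ closedBall 0 r, ∀ v ∈ closedBall 0 r,
    ‖g v - g u - D u (v - u)‖ ≤ M * ‖v - u‖ ^ 2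
  lipschitz_deriv : LipschitzOnWith M D (closedBall 0 r)

variable {a b δ ℓ r' : ℝ} {κ M M' : ℝ≥0} {f : E × V → E × V}
  {Df : E × V → (E × V →L[ℝ] E × V)} {g : E → V} {D : E → E →L[ℝ] V} {z z' : E × V}

lemma AdmissibleGraph.isConeGraph {r : ℝ} (hg : AdmissibleGraph κ M r g D) :
    IsConeGraph κ r g where
  map_zero := norm_le_zero_iff.1 <| by simpa using hg.norm_le 0
  lipschitz := hg.lipschitz

lemma AdmissibleGraph.zero (κ M : ℝ≥0) (r : ℝ) :
    AdmissibleGraph κ M r (0 : E → V) (0 : E → E →L[ℝ] V) where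
  norm_le u := by simp only [Pi.zero_apply, norm_zero]; positivity
  norm_deriv_le u := by simp
  deriv_zero := rfl
  lipschitz := (LipschitzWith.const' 0).lipschitzOnWith
  taylor u _ v _ := by
    simp only [Pi.zero_apply, zero_apply, sub_self, norm_zero]
    positivity
  lipschitz_deriv := (LipschitzWith.const' 0).lipschitzOnWith

namespace HyperbolicChart

variable [FiniteDimensional ℝ E] (hf : HyperbolicChart a b ℓ δ f Df)
  (hc : ConeCondition a b δ κ) (hℓ : 0 < ℓ)

include hf hc hℓ

lemma surjOn_fst_apply_graph (hg : IsConeGraph κ (δ / ℓ) g) :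
    SurjOn (fun w => (f (w, g w)).1) (closedBall 0 (δ / ℓ))
      (closedBall 0 ((a - δ) * (δ / ℓ))) := by
  have hδ := hc.δ_nonneg
  have happrox : ApproximatesLinearOn (fun w => (f (w, g w)).1) (unstableBlock (Df 0))
      (closedBall 0 (δ / ℓ)) δ.toNNReal := by
    intro w hw w' hw'
    have hz := mk_mem_ballGraph (g := g) hw
    have hz' := mk_mem_ballGraph (g := g) hw'
    have hfst := hf.hyperbolic.norm_fst_sub_le (hf.norm_secant_sub_le hc hℓ hg hz hz')
    rw [norm_eq_norm_fst_of_cone hc.κ_le_one (hg.norm_snd_sub_le hz hz')] at hfst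
    simpa [hδ] using hfst
  have hsurj := surjOn_closedBall_of_approximates_expanding (hδ.trans_lt hc.δ_lt)
    hf.hyperbolic.le_norm_unstableBlock (by positivity) happrox
  have hzero : f (0, 0) = (0, 0) := hf.map_zero
  simpa [hg.map_zero, hzero, hδ] using hsurj

section Admissible

variable (hg : AdmissibleGraph κ M (δ / ℓ) g D)
  (hM : (1 + κ) * ℓ + (b + (1 + κ) * δ) * M ≤ M' * (a - δ) ^ 2)
  (hz : z ∈ ballGraph (δ / ℓ) g) (hz' : z' ∈ ballGraph (δ / ℓ) g)

include hg hM hz hz'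

lemma norm_taylor_image_le :
    ‖(f z').2 - (f z).2 - imageSlope (Df z) (D z.1) ((f z').1 - (f z).1)‖ ≤
      M' * ‖(f z').1 - (f z).1‖ ^ 2 := by
  have hcone := hg.isConeGraph
  have hzB := hcone.ballGraph_subset_closedBall hc.κ_le_one hz
  have hzB' := hcone.ballGraph_subset_closedBall hc.κ_le_one hz'
  have hnorm : ‖z' - z‖ = ‖z'.1 - z.1‖ :=
    norm_eq_norm_fst_of_cone hc.κ_le_one (hcone.norm_snd_sub_le hz' hz)
  have hfz : ‖f z' - f z - Df z (z' - z)‖ ≤ ℓ * ‖z'.1 - z.1‖ ^ 2 := by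
    simpa [hnorm, hℓ.le] using norm_taylor_le_of_lipschitzOnWith (convex_closedBall 0 (δ / ℓ))
      hf.hasDeriv hf.lipDeriv hzB hzB'
  have hsplit : z' - z =
      (z'.1 - z.1, D z.1 (z'.1 - z.1) + (g z'.1 - g z.1 - D z.1 (z'.1 - z.1))) := by
    rw [add_sub_cancel, ← hz.2, ← hz'.2]
    rfl
  rw [hsplit] at hfz
  calc ‖(f z' - f z).2 - imageSlope (Df z) (D z.1) (f z' - f z).1‖
      ≤ (1 + κ) * (ℓ * ‖z'.1 - z.1‖ ^ 2) + (b + (1 + κ) * δ) * (M * ‖z'.1 - z.1‖ ^ 2) :=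
        norm_snd_sub_imageSlope_le hc hf.hyperbolic (hf.norm_deriv_sub_le hc.δ_nonneg hℓ hzB)
          (hg.norm_deriv_le _) hfz (hg.taylor _ hz.1 _ hz'.1)
    _ = ((1 + κ) * ℓ + (b + (1 + κ) * δ) * M) * ‖z'.1 - z.1‖ ^ 2 := by ring
    _ ≤ M' * (a - δ) ^ 2 * ‖z'.1 - z.1‖ ^ 2 := by gcongr
    _ = M' * ((a - δ) * ‖z'.1 - z.1‖) ^ 2 := by ring
    _ ≤ M' * ‖(f z').1 - (f z).1‖ ^ 2 := by
      have ha : 0 ≤ a - δ := sub_nonneg.2 hc.δ_lt.le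
      gcongr
      exact hf.mul_norm_fst_sub_le hc hℓ hcone hz' hz

lemma norm_slope_image_sub_le :
    ‖imageSlope (Df z) (D z.1) - imageSlope (Df z') (D z'.1)‖ ≤
      M' * ‖(f z).1 - (f z').1‖ := by
  have ha : 0 < a - δ := sub_pos.2 hc.δ_lt
  have hcone := hg.isConeGraph
  have hzB := hcone.ballGraph_subset_closedBall hc.κ_le_one hz
  have hzB' := hcone.ballGraph_subset_closedBall hc.κ_le_one hz'
  have hDf : ‖Df z - Df z'‖ ≤ ℓ * ‖z.1 - z'.1‖ := by
    have hlip := hf.lipDeriv.norm_sub_le hzB hzB'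
    rwa [Real.coe_toNNReal _ hℓ.le,
      norm_eq_norm_fst_of_cone hc.κ_le_one (hcone.norm_snd_sub_le hz hz')] at hlip
  calc ‖imageSlope (Df z) (D z.1) - imageSlope (Df z') (D z'.1)‖
      ≤ ((1 + κ) * (ℓ * ‖z.1 - z'.1‖) + (b + (1 + κ) * δ) * (M * ‖z.1 - z'.1‖)) / (a - δ) :=
        norm_imageSlope_sub_le hc hf.hyperbolic
          (hf.norm_deriv_sub_le hc.δ_nonneg hℓ hzB) (hg.norm_deriv_le _)
          (hf.norm_deriv_sub_le hc.δ_nonneg hℓ hzB') (hg.norm_deriv_le _)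
          hDf (hg.lipschitz_deriv.norm_sub_le hz.1 hz'.1)
    _ = ((1 + κ) * ℓ + (b + (1 + κ) * δ) * M) * ‖z.1 - z'.1‖ / (a - δ) := by ring
    _ ≤ M' * (a - δ) ^ 2 * ‖z.1 - z'.1‖ / (a - δ) := by gcongr
    _ = M' * ((a - δ) * ‖z.1 - z'.1‖) := by field_simp
    _ ≤ M' * ‖(f z).1 - (f z').1‖ := by
      gcongr
      exact hf.mul_norm_fst_sub_le hc hℓ hcone hz hz'

end Admissible

-- The inverse branch `h` is extended by `0` off the ball, which keeps the global growth bounds.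
lemma exists_inverseBranch (hg : IsConeGraph κ (δ / ℓ) g) (hr : r' ≤ (a - δ) * (δ / ℓ)) :
    ∃ h : E → E × V, (∀ u, h u ∈ ballGraph (δ / ℓ) g) ∧
      (∀ u ∈ closedBall 0 r', (f (h u)).1 = u) ∧ (∀ u ∉ closedBall 0 r', h u = 0) ∧ h 0 = 0 := by
  have hbranch (u : E) : ∃ z ∈ ballGraph (δ / ℓ) g,
      (u ∈ closedBall 0 r' → (f z).1 = u) ∧ (u ∉ closedBall 0 r' → z = 0) := by
    by_cases hu : u ∈ closedBall 0 r'
    · obtain ⟨w, hw, hfw⟩ := hf.surjOn_fst_apply_graph hc hℓ hg (closedBall_subset_closedBall hr hu)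
      exact ⟨(w, g w), mk_mem_ballGraph hw, fun _ => hfw, absurd hu⟩
    · exact ⟨0, hg.zero_mem_ballGraph (div_nonneg hc.δ_nonneg hℓ.le), (absurd · hu), fun _ => rfl⟩
  choose h hmem hinv hoff using hbranch
  refine ⟨h, hmem, hinv, hoff, ?_⟩
  by_cases h0 : (0 : E) ∈ closedBall 0 r'
  · have hfst : (h 0).1 = 0 := by
      have hexp := hf.mul_norm_fst_le hc hℓ hg (hmem 0)
      rw [hinv 0 h0, norm_zero] at hexp
      exact norm_le_zero_iff.1 (nonpos_of_mul_nonpos_right hexp (sub_pos.2 hc.δ_lt))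
    exact Prod.ext hfst <| by rw [(hmem 0).2, hfst, hg.map_zero, Prod.snd_zero]
  · exact hoff 0 h0

lemma exists_admissible_image (hg : AdmissibleGraph κ M (δ / ℓ) g D)
    (hr : r' ≤ (a - δ) * (δ / ℓ))
    (hM : (1 + κ) * ℓ + (b + (1 + κ) * δ) * M ≤ M' * (a - δ) ^ 2) :
    ∃ g' D', AdmissibleGraph κ M' r' g' D' ∧ ballGraph r' g' ⊆ f '' ballGraph (δ / ℓ) g := by
  have hcone := hg.isConeGraph
  obtain ⟨h, hmem, hinv, hoff, hzero⟩ := hf.exists_inverseBranch hc hℓ hcone hr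
  refine ⟨fun u => (f (h u)).2, fun u => imageSlope (Df (h u)) (D (h u).1), ?_, ?_⟩
  · constructor
    case norm_le =>
      intro u
      by_cases hu : u ∈ closedBall 0 r'
      · simpa [hinv u hu, hf.map_zero] using hf.norm_snd_sub_le hc hℓ hcone (hmem u)
          (hcone.zero_mem_ballGraph (div_nonneg hc.δ_nonneg hℓ.le))
      · simp only [hoff u hu, hf.map_zero, Prod.snd_zero, norm_zero]
        positivity
    case norm_deriv_le =>
      exact fun u => norm_imageSlope_le hc hf.hyperbolic (hf.norm_deriv_sub_le hc.δ_nonneg hℓ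
        (hcone.ballGraph_subset_closedBall hc.κ_le_one (hmem u))) (hg.norm_deriv_le _)
    case deriv_zero =>
      simp only [hzero, Prod.fst_zero, hg.deriv_zero, imageSlope_zero hc hf.hyperbolic]
    case lipschitz =>
      refine .of_dist_le_mul fun u hu v hv => ?_
      simpa [dist_eq_norm, hinv u hu, hinv v hv]
        using hf.norm_snd_sub_le hc hℓ hcone (hmem u) (hmem v)
    case taylor =>
      intro u hu v hv
      simpa only [hinv u hu, hinv v hv]
        using hf.norm_taylor_image_le hc hℓ hg hM (hmem u) (hmem v)
    case lipschitz_deriv =>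
      refine .of_dist_le_mul fun u hu v hv => ?_
      simpa only [dist_eq_norm, hinv u hu, hinv v hv]
        using hf.norm_slope_image_sub_le hc hℓ hg hM (hmem u) (hmem v)
  · exact fun p hp => ⟨h p.1, hmem p.1, Prod.ext (hinv p.1 hp.1) hp.2.symm⟩

end HyperbolicChart

end GraphTransform

section Compactness

lemma isClosed_setOf_ballGraph_subset_image {E V : Type*} [NormedAddCommGroup E] [ProperSpace E]
    [NormedAddCommGroup V] {κ : ℝ≥0} {r r' : ℝ} {f : E × V → E × V}
    {S S' : Set (E → V)} (hκ : (κ : ℝ) ≤ 1) (hf : ContinuousOn f (closedBall 0 r))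
    (hS : IsCompact S) (hS' : IsCompact S') (hcone : ∀ g ∈ S, IsConeGraph κ r g) :
    IsClosed {p : (E → V) × (E → V) |
      p ∈ S ×ˢ S' ∧ ballGraph r' p.2 ⊆ f '' ballGraph r p.1} := by
  let T : Set (((E → V) × (E → V)) × E) := (S ×ˢ S') ×ˢ closedBall 0 r
  have hT : IsCompact T := (hS.prod hS').prod (isCompact_closedBall 0 r)
  have heval : ContinuousOn (fun q : (E → V) × E => q.1 q.2) (S ×ˢ closedBall 0 r) :=
    continuousOn_prod_of_continuousOn_lipschitzOnWith' _ κ (fun g hg => (hcone g hg).lipschitz)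
      fun w _ => (continuous_apply w).continuousOn
  have hgraph : ContinuousOn (fun q : ((E → V) × (E → V)) × E => f (q.2, q.1.1 q.2)) T := by
    have heval' : ContinuousOn (fun q : ((E → V) × (E → V)) × E => q.1.1 q.2) T :=
      heval.comp ((continuous_fst.comp continuous_fst).prodMk continuous_snd).continuousOn
        fun q hq => ⟨hq.1.1, hq.2⟩
    exact hf.comp (continuousOn_snd.prodMk heval') fun q hq =>
      (hcone _ hq.1.1).ballGraph_subset_closedBall hκ (mk_mem_ballGraph hq.2)
  have hpoint (u : E) :
      IsClosed (Prod.fst '' {q ∈ T | f (q.2, q.1.1 q.2) = (u, q.1.2 u)}) := by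
    refine (hT.of_isClosed_subset ?_ (sep_subset _ _)).image continuous_fst |>.isClosed
    have hright : Continuous fun q : ((E → V) × (E → V)) × E => (u, q.1.2 u) := by fun_prop
    exact (hgraph.prodMk hright.continuousOn).preimage_isClosed_of_isClosed hT.isClosed
      isClosed_diagonal
  have hinter : {p : (E → V) × (E → V) |
      p ∈ S ×ˢ S' ∧ ballGraph r' p.2 ⊆ f '' ballGraph r p.1} =
      (S ×ˢ S') ∩ ⋂ u ∈ closedBall (0 : E) r',
        Prod.fst '' {q ∈ T | f (q.2, q.1.1 q.2) = (u, q.1.2 u)} := by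
    ext p
    simp only [mem_inter_iff, mem_iInter]
    refine and_congr_right fun hp => ⟨fun hsub u hu => ?_, fun h q hq => ?_⟩
    · obtain ⟨z, hz, hfz⟩ := hsub (mk_mem_ballGraph hu)
      exact ⟨(p, z.1), ⟨⟨hp, hz.1⟩, by rwa [← hz.2]⟩, rfl⟩
    · obtain ⟨⟨_, w⟩, ⟨⟨-, hw⟩, hfw⟩, rfl⟩ := h q.1 hq.1
      exact ⟨_, mk_mem_ballGraph hw, hfw.trans (Prod.ext rfl hq.2.symm)⟩
  rw [hinter]
  exact (hS.prod hS').isClosed.inter (isClosed_biInter fun u _ => hpoint u)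

variable {E V : Type*} [NormedAddCommGroup E] [NormedSpace ℝ E] [FiniteDimensional ℝ E]
  [NormedAddCommGroup V] [NormedSpace ℝ V] [FiniteDimensional ℝ V]

/-- The functions whose graph over the closed `r`-ball is a cone graph of curvature at most `M`,
with the topology of pointwise convergence. -/
def admissibleGraphs (E V : Type*) [NormedAddCommGroup E] [NormedSpace ℝ E]
    [NormedAddCommGroup V] [NormedSpace ℝ V] (κ M : ℝ≥0) (r : ℝ) : Set (E → V) :=
  {g | ∃ D, AdmissibleGraph κ M r g D}

lemma isCompact_setOf_admissibleGraph (κ M : ℝ≥0) (r : ℝ) :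
    IsCompact {p : (E → V) × (E → E →L[ℝ] V) | AdmissibleGraph κ M r p.1 p.2} := by
  have := FiniteDimensional.proper ℝ V
  have := FiniteDimensional.proper ℝ (E →L[ℝ] V)
  have hbounded : IsCompact ((univ.pi fun u : E => closedBall (0 : V) (κ * ‖u‖)) ×ˢ
      (univ.pi fun _ : E => closedBall (0 : E →L[ℝ] V) κ)) :=
    (isCompact_univ_pi fun _ => isCompact_closedBall _ _).prod
      (isCompact_univ_pi fun _ => isCompact_closedBall _ _)
  refine hbounded.of_isClosed_subset ?_ fun p hp =>
    ⟨fun u _ => mem_closedBall_zero_iff.2 (hp.norm_le u),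
      fun u _ => mem_closedBall_zero_iff.2 (hp.norm_deriv_le u)⟩
  have hset : {p : (E → V) × (E → E →L[ℝ] V) | AdmissibleGraph κ M r p.1 p.2} =
      {p | (∀ u, ‖p.1 u‖ ≤ κ * ‖u‖) ∧ (∀ u, ‖p.2 u‖ ≤ κ) ∧ p.2 0 = 0 ∧
        p.1 ∈ {g | LipschitzOnWith κ g (closedBall 0 r)} ∧
        (∀ u ∈ closedBall 0 r, ∀ v ∈ closedBall 0 r,
          ‖p.1 v - p.1 u - p.2 u (v - u)‖ ≤ M * ‖v - u‖ ^ 2) ∧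
        p.2 ∈ {D | LipschitzOnWith M D (closedBall 0 r)}} := by
    ext p
    exact ⟨fun ⟨h₁, h₂, h₃, h₄, h₅, h₆⟩ => ⟨h₁, h₂, h₃, h₄, h₅, h₆⟩,
      fun ⟨h₁, h₂, h₃, h₄, h₅, h₆⟩ => ⟨h₁, h₂, h₃, h₄, h₅, h₆⟩⟩
  rw [hset]
  simp only [ofPred_and, ofPred_forall]
  refine .inter ?_ <| .inter ?_ <| .inter ?_ <| .inter ?_ <| .inter ?_ ?_
  · exact isClosed_iInter fun u => isClosed_le (by fun_prop) (by fun_prop)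
  · exact isClosed_iInter fun u => isClosed_le (by fun_prop) (by fun_prop)
  · exact isClosed_eq (by fun_prop) (by fun_prop)
  · exact (isClosed_setOfPred_lipschitzOnWith κ _).preimage continuous_fst
  · exact isClosed_biInter fun u _ => isClosed_biInter fun v _ =>
      isClosed_le (by fun_prop) (by fun_prop)
  · exact (isClosed_setOfPred_lipschitzOnWith M _).preimage continuous_snd

lemma isCompact_admissibleGraphs (κ M : ℝ≥0) (r : ℝ) :
    IsCompact (admissibleGraphs E V κ M r) := by
  convert (isCompact_setOf_admissibleGraph (E := E) (V := V) κ M r).image continuous_fst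
  ext g
  exact ⟨fun ⟨D, h⟩ => ⟨(g, D), h, rfl⟩, fun ⟨⟨_, D⟩, h, hg⟩ => ⟨D, hg ▸ h⟩⟩

end Compactness

section UnstableFamily

variable {E V : Type*} [NormedAddCommGroup E] [NormedSpace ℝ E] [FiniteDimensional ℝ E]
  [NormedAddCommGroup V] [NormedSpace ℝ V] [FiniteDimensional ℝ V]
  {a b : ℝ} {κ : ℝ≥0}

lemma exists_isUnstableFamily {δ C : ℝ} {L : ℕ → ℝ} {F : ℕ → E × V → E × V}
    {DF : ℕ → E × V → (E × V →L[ℝ] E × V)} (hc : ConeCondition a b δ κ) (hC : 0 ≤ C)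
    (hCδ : 1 + κ + (b + (1 + κ) * δ) * C ≤ C * (a - δ)) (hL : ∀ n, 0 < L n)
    (hLδ : ∀ n, L (n + 1) ≤ (a - δ) * L n)
    (hF : ∀ n, HyperbolicChart a b (L (n + 1)) δ (F n) (DF n)) :
    ∃ g : ℕ → E → V, IsUnstableFamily κ (fun n => δ / L n) F g ∧
      ∀ n, g n ∈ admissibleGraphs E V κ (C * L n).toNNReal (δ / L n) := by
  have := FiniteDimensional.proper ℝ E
  have hδ := hc.δ_nonneg
  have ha : 0 ≤ a - δ := sub_nonneg.2 hc.δ_lt.le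
  let M (n : ℕ) : ℝ≥0 := (C * L n).toNNReal
  have hM_coe (n : ℕ) : (M n : ℝ) = C * L n := Real.coe_toNNReal _ (mul_nonneg hC (hL n).le)
  have hM (n : ℕ) :
      (1 + κ) * L (n + 1) + (b + (1 + κ) * δ) * M (n + 1) ≤ M n * (a - δ) ^ 2 := by
    rw [hM_coe, hM_coe]
    calc (1 + κ) * L (n + 1) + (b + (1 + κ) * δ) * (C * L (n + 1))
        = (1 + κ + (b + (1 + κ) * δ) * C) * L (n + 1) := by ring
      _ ≤ C * (a - δ) * ((a - δ) * L n) :=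
        mul_le_mul hCδ (hLδ n) (hL _).le (mul_nonneg hC ha)
      _ = C * L n * (a - δ) ^ 2 := by ring
  have hr (n : ℕ) : δ / L n ≤ (a - δ) * (δ / L (n + 1)) := by
    rw [mul_div_left_comm, div_eq_mul_inv δ]
    gcongr
    rw [inv_le_iff_one_le_mul₀ (hL n), div_mul_eq_mul_div, one_le_div (hL _)]
    exact hLδ n
  have hcone (n : ℕ) : ∀ g ∈ admissibleGraphs E V κ (M n) (δ / L n), IsConeGraph κ (δ / L n) g :=
    fun _ ⟨_, hg⟩ => hg.isConeGraph
  have hcont (n : ℕ) : ContinuousOn (F n) (closedBall 0 (δ / L (n + 1))) := fun z hz =>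
    ((hF n).hasDeriv z hz).continuousWithinAt
  obtain ⟨g, hg⟩ := exists_seq_of_isClosed_rel
    (R := fun n g g' => ballGraph (δ / L n) g' ⊆ F n '' ballGraph (δ / L (n + 1)) g)
    (fun n => isCompact_admissibleGraphs (E := E) (V := V) κ (M n) (δ / L n))
    (fun n => ⟨0, 0, .zero κ (M n) _⟩)
    (fun n => isClosed_setOf_ballGraph_subset_image hc.κ_le_one (hcont n)
      (isCompact_admissibleGraphs ..) (isCompact_admissibleGraphs ..) (hcone (n + 1)))
    (fun n g ⟨D, hg⟩ =>
      let ⟨g', D', hg', hsub⟩ := (hF n).exists_admissible_image hc (hL _) hg (hr n) (hM n)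
      ⟨g', ⟨D', hg'⟩, hsub⟩)
  exact ⟨g, ⟨fun n => hcone n _ (hg n).1, fun n => (hg n).2⟩, fun n => (hg n).1⟩

lemma coneCondition_of_le {δ : ℝ} (hb : 0 ≤ b) (hba : b < a) (hκ : (κ : ℝ) ≤ 1) (hδ : 0 ≤ δ)
    (hδκ : δ ≤ κ * (a - b) / 6) : ConeCondition a b δ κ where
  b_nonneg := hb
  δ_nonneg := hδ
  δ_lt := by nlinarith
  κ_le_one := hκ
  invariant := by nlinarith [mul_nonneg κ.2 hδ]

lemma curvature_bound_of_le {δ : ℝ} (hba : b < a) (hκ : (κ : ℝ) ≤ 1) (hδ : 0 ≤ δ)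
    (hδab : 6 * δ ≤ a - b) :
    1 + κ + (b + (1 + κ) * δ) * (4 / (a - b)) ≤ 4 / (a - b) * (a - δ) := by
  have hab : 0 < a - b := sub_pos.2 hba
  have hκδ : κ * δ ≤ δ := mul_le_of_le_one_left hδ hκ
  calc 1 + κ + (b + (1 + κ) * δ) * (4 / (a - b))
      ≤ 2 + (b + (1 + κ) * δ) * (4 / (a - b)) := by linarith
    _ = 4 / (a - b) * ((a - b) / 2 + b + (1 + κ) * δ) := by field_simp; ring
    _ ≤ 4 / (a - b) * (a - δ) :=
      mul_le_mul_of_nonneg_left (by linarith) (div_nonneg zero_le_four hab.le)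

theorem local_unstable_manifolds_general {c : ℝ} (hb : 0 ≤ b) (hba : b < a) (hca : c < a)
    (hκ : 0 < κ) (hκ1 : κ ≤ 1) :
    ∃ δstar C : ℝ, 0 < δstar ∧ 0 < C ∧
      ∀ δ : ℝ, 0 < δ → δ < δstar →
      ∀ (L : ℕ → ℝ) (F : ℕ → E × V → E × V) (DF : ℕ → E × V → (E × V →L[ℝ] E × V)),
        (∀ n, 0 < L n) →
        (∀ n, L (n + 1) ≤ c * L n) →
        (∀ n, HyperbolicChart a b (L (n + 1)) δ (F n) (DF n)) →
        ∃ g : ℕ → E → V,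
          IsUnstableFamily κ (fun n => δ / L n) F g ∧
          (∀ n, ∃ Dg : E → (E →L[ℝ] V),
            (∀ u ∈ closedBall (0 : E) (δ / L n),
              HasFDerivWithinAt (g n) (Dg u) (closedBall (0 : E) (δ / L n)) u) ∧
            Dg 0 = 0 ∧
            LipschitzOnWith (C * L n).toNNReal Dg (closedBall (0 : E) (δ / L n))) ∧
          (∀ n, ∀ z₁ ∈ ballGraph (δ / L (n + 1)) (g (n + 1)),
            ∀ z₂ ∈ ballGraph (δ / L (n + 1)) (g (n + 1)),
            (a - δ) * ‖z₁ - z₂‖ ≤ ‖F n z₁ - F n z₂‖) ∧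
          (∀ g' : ℕ → E → V, IsUnstableFamily κ (fun n => δ / L n) F g' →
            ∀ n, EqOn (g' n) (g n) (closedBall (0 : E) (δ / L n))) := by
  have hκ1' : (κ : ℝ) ≤ 1 := mod_cast hκ1
  have hab : 0 < a - b := sub_pos.2 hba
  have hC : 0 < 4 / (a - b) := div_pos four_pos hab
  refine ⟨min (κ * (a - b) / 6) (a - c), 4 / (a - b), lt_min (by positivity) (sub_pos.2 hca), hC,
    fun δ hδ hδstar L F DF hL hLc hF => ?_⟩
  obtain ⟨hδκ, hδc⟩ := lt_min_iff.1 hδstar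
  have hδab : 6 * δ ≤ a - b := by nlinarith
  have hc : ConeCondition a b δ κ := coneCondition_of_le hb hba hκ1' hδ.le hδκ.le
  obtain ⟨g, hg, hadm⟩ := exists_isUnstableFamily hc hC.le
    (curvature_bound_of_le hba hκ1' hδ.le hδab) hL
    (fun n => (hLc n).trans (mul_le_mul_of_nonneg_right (by linarith) (hL n).le)) hF
  refine ⟨g, hg, fun n => ?_, fun n z₁ hz₁ z₂ hz₂ => ?_, fun g' hg' n => ?_⟩
  · obtain ⟨Dg, hDg⟩ := hadm n
    exact ⟨Dg, fun u hu => hasFDerivWithinAt_of_norm_taylor_le (hDg.taylor u hu),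
      hDg.deriv_zero, hDg.lipschitz_deriv⟩
  · exact (hF n).mul_norm_sub_le hc (hL _) (hg.isConeGraph (n + 1)) hz₁ hz₂
  · exact hg'.eqOn hc (by linarith) hL hF hg n

end UnstableFamily

/-- The local unstable manifold theorem along a backward hyperbolic chart sequence
(Proposition 2.5), in chart-level form.  Backward indices `k ≤ 0` are modelled by
`n : ℕ` via `k = -n`: `L n = ℓ_{-n}`, and `F n` is the connecting chart map
`f̃_{-(n+1)}`, carrying chart `-(n+1)` to chart `-n`, with data `(lam, δ0, L (n+1), δ)`. -/
theorem local_unstable_manifolds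
    (du dcs : ℕ) (hdu : 1 ≤ du) (hdcs : 1 ≤ dcs)
    (lam δ0 δ2 : ℝ) (hlam : 0 < lam) (hδ0 : 0 ≤ δ0) (hδ2 : 0 ≤ δ2)
    (hsmall : δ0 + δ2 < lam / 4) :
    ∃ δstar C : ℝ, 0 < δstar ∧ 0 < C ∧
      ∀ δ : ℝ, 0 < δ → δ < δstar →
      ∀ (L : ℕ → ℝ) (F : ℕ → PSp du dcs → PSp du dcs)
        (DF : ℕ → PSp du dcs → (PSp du dcs →L[ℝ] PSp du dcs)),
        (∀ n, 1 ≤ L n) →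
        (∀ n, Real.exp (-δ2) ≤ L n / L (n + 1)) →
        (∀ n, L n / L (n + 1) ≤ Real.exp δ2) →
        (∀ n, IsChartMap du dcs lam δ0 (L (n + 1)) δ (F n) (DF n)) →
        ∃ g : ℕ → EuSp du → CsSp dcs,
          -- the defining properties of the family
          (∀ n, g n 0 = 0) ∧
          (∀ n, LipschitzOnWith ((1 : ℝ) / 10).toNNReal (g n)
            (closedBall (0 : EuSp du) (δ / L n))) ∧
          (∀ n, uGraph du dcs (δ / L n) (g n) ⊆
            F n '' uGraph du dcs (δ / L (n + 1)) (g (n + 1))) ∧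
          -- moreover: each `g_k` is `C^{1+Lip}` with `(dg_k)₀ = 0` and `Lip(dg_k) ≤ C ℓ_k`
          (∀ n, ∃ Dgn : EuSp du → (EuSp du →L[ℝ] CsSp dcs),
            (∀ u ∈ closedBall (0 : EuSp du) (δ / L n),
              HasFDerivWithinAt (g n) (Dgn u) (closedBall (0 : EuSp du) (δ / L n)) u) ∧
            Dgn 0 = 0 ∧
            LipschitzOnWith (C * L n).toNNReal Dgn
              (closedBall (0 : EuSp du) (δ / L n))) ∧
          -- backward expansion along the graphs
          (∀ n, ∀ z1 ∈ uGraph du dcs (δ / L (n + 1)) (g (n + 1)),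
            ∀ z2 ∈ uGraph du dcs (δ / L (n + 1)) (g (n + 1)),
            F n z1 ∈ uGraph du dcs (δ / L n) (g n) →
            F n z2 ∈ uGraph du dcs (δ / L n) (g n) →
            (Real.exp lam - δ) * ‖z1 - z2‖ ≤ ‖F n z1 - F n z2‖) ∧
          -- uniqueness of the family
          (∀ g' : ℕ → EuSp du → CsSp dcs,
            (∀ n, g' n 0 = 0) →
            (∀ n, LipschitzOnWith ((1 : ℝ) / 10).toNNReal (g' n)
              (closedBall (0 : EuSp du) (δ / L n))) →
            (∀ n, uGraph du dcs (δ / L n) (g' n) ⊆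
              F n '' uGraph du dcs (δ / L (n + 1)) (g' (n + 1))) →
            ∀ n, ∀ u ∈ closedBall (0 : EuSp du) (δ / L n), g' n u = g n u) := by
  have hexp : Real.exp δ0 < Real.exp lam := Real.exp_lt_exp.2 (by linarith)
  have hexp2 : Real.exp δ2 < Real.exp lam := Real.exp_lt_exp.2 (by linarith)
  obtain ⟨δstar, C, hδstar, hC, hmain⟩ := local_unstable_manifolds_general
    (E := EuSp du) (V := CsSp dcs) (κ := ((1 : ℝ) / 10).toNNReal)
    (Real.exp_pos δ0).le hexp hexp2 (by norm_num) (by norm_num)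
  refine ⟨δstar, C, hδstar, hC, fun δ hδ hδ' L F DF hL hLlow _ hF => ?_⟩
  have hLpos (n : ℕ) : 0 < L n := one_pos.trans_le (hL n)
  have hLgrowth (n : ℕ) : L (n + 1) ≤ Real.exp δ2 * L n := by
    rw [← inv_mul_le_iff₀ (Real.exp_pos δ2), ← Real.exp_neg]
    exact (le_div_iff₀ (hLpos (n + 1))).1 (hLlow n)
  obtain ⟨g, hg, hsmooth, hexpand, huniq⟩ :=
    hmain δ hδ hδ' L F DF hLpos hLgrowth fun n => (hF n).hyperbolicChart
  exact ⟨g, fun n => (hg.isConeGraph n).map_zero, fun n => (hg.isConeGraph n).lipschitz,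
    hg.ballGraph_subset, hsmooth, fun n z₁ hz₁ z₂ hz₂ _ _ => hexpand n z₁ hz₁ z₂ hz₂,
    fun g' hzero hlip hsub n => huniq g' ⟨fun n => ⟨hzero n, hlip n⟩, hsub⟩ n⟩
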